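/- For every real number q with 0 < q < 1, ∫_0^q ∏_{j=1}^∞ (1−t^{2j})^8 (1−t^{4j})^4 / (1−t^j)^8 dt = q ∏_{j=1}^∞ (1−q^{2j})^2 (1−q^{8j})^4 / ((1−q^j)^4 (1−q^{4j})^2). Moreover this common value equals 1/√32 when q = e^{−π/√2}. -/

import Mathlib

open Real

/-- The integrand `∏_{j=1}^∞ (1−t^{2j})^8 (1−t^{4j})^4 / (1−t^j)^8`. -/
noncomputable def U4 (t : ℝ) : ℝ :=
  ∏' j : ℕ, (1 - t ^ (2 * (j + 1))) ^ 8 * (1 - t ^ (4 * (j + 1))) ^ 4 / (1 - t ^ (j + 1)) ^ 8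

/-- The antiderivative `q ∏_{j=1}^∞ (1−q^{2j})^2 (1−q^{8j})^4 / ((1−q^j)^4 (1−q^{4j})^2)`. -/
noncomputable def V4 (q : ℝ) : ℝ :=
  q * ∏' j : ℕ, (1 - q ^ (2 * (j + 1))) ^ 2 * (1 - q ^ (8 * (j + 1))) ^ 4 /
    ((1 - q ^ (j + 1)) ^ 4 * (1 - q ^ (4 * (j + 1))) ^ 2)


open Filter Topology

/-- finite q-Pochhammer. -/
noncomputable def PP (x : ℝ) (N : ℕ) : ℝ := ∏ k ∈ Finset.range N, (1 - x ^ (k + 1))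

/-- infinite q-Pochhammer. -/
noncomputable def EE (x : ℝ) : ℝ := ∏' k : ℕ, (1 - x ^ (k + 1))

/-- q-binomial. -/
noncomputable def qb (x : ℝ) : ℕ → ℕ → ℝ
  | _, 0 => 1
  | 0, _ + 1 => 0
  | M + 1, k + 1 => qb x M k + x ^ (k + 1) * qb x M (k + 1)

lemma PP_succ (x : ℝ) (N : ℕ) : PP x (N + 1) = PP x N * (1 - x ^ (N + 1)) := by
  simp [PP, Finset.prod_range_succ]

lemma PP_zero (x : ℝ) : PP x 0 = 1 := by simp [PP]

lemma qb_zero_right (x : ℝ) (M : ℕ) : qb x M 0 = 1 := by cases M <;> rfl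

lemma qb_zero_succ (x : ℝ) (k : ℕ) : qb x 0 (k + 1) = 0 := rfl

lemma qb_succ_succ (x : ℝ) (M k : ℕ) :
    qb x (M + 1) (k + 1) = qb x M k + x ^ (k + 1) * qb x M (k + 1) := rfl

lemma qb_eq_zero (x : ℝ) : ∀ (M k : ℕ), M < k → qb x M k = 0
  | _, 0, h => absurd h (by omega)
  | 0, k + 1, _ => rfl
  | M + 1, k + 1, h => by
    rw [qb_succ_succ, qb_eq_zero x M k (by omega), qb_eq_zero x M (k + 1) (by omega)]; ring

lemma qb_self (x : ℝ) : ∀ M, qb x M M = 1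
  | 0 => rfl
  | M + 1 => by rw [qb_succ_succ, qb_self x M, qb_eq_zero x M (M + 1) (by omega)]; ring

lemma qb_mul (x : ℝ) : ∀ a b : ℕ, qb x (a + b) a * PP x a * PP x b = PP x (a + b)
  | 0, b => by simp [qb_zero_right, PP_zero]
  | a + 1, 0 => by simp [qb_self, PP_zero]
  | a + 1, b + 1 => by
    have h1 := qb_mul x a (b + 1)
    have h2 := qb_mul x (a + 1) b
    rw [show a + 1 + (b + 1) = (a + b + 1) + 1 by ring, qb_succ_succ, PP_succ x (a + b + 1)]
    rw [show a + (b + 1) = a + b + 1 by ring] at h1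
    rw [show a + 1 + b = a + b + 1 by ring] at h2
    rw [PP_succ x a, PP_succ x b] at *
    have e : (qb x (a + b + 1) a + x ^ (a + 1) * qb x (a + b + 1) (a + 1)) *
        (PP x a * (1 - x ^ (a + 1))) * (PP x b * (1 - x ^ (b + 1))) =
        (1 - x ^ (a + 1)) * (qb x (a + b + 1) a * PP x a * (PP x b * (1 - x ^ (b + 1)))) +
        x ^ (a + 1) * (1 - x ^ (b + 1)) *
          (qb x (a + b + 1) (a + 1) * (PP x a * (1 - x ^ (a + 1))) * PP x b) := by ring
    rw [e, h1, h2]; ring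

lemma gauss (x : ℝ) (M : ℕ) : ∀ z : ℝ, ∏ k ∈ Finset.range M, (1 + z * x ^ k) =
    ∑ k ∈ Finset.range (M + 1), x ^ (k.choose 2) * z ^ k * qb x M k := by
  induction M with
  | zero => intro z; simp [qb_zero_right]
  | succ M ih =>
    intro z
    rw [Finset.prod_range_succ']
    have : ∀ k, 1 + z * x ^ (k + 1) = 1 + (z * x) * x ^ k := fun k => by ring
    simp only [this, ih]
    rw [Finset.sum_range_succ' _ (M + 1)]
    simp only [qb_succ_succ, qb_zero_right]
    have h1 : ∑ k ∈ Finset.range (M + 1), x ^ (k.choose 2) * (z * x) ^ k * qb x M k =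
       1 + ∑ k ∈ Finset.range (M + 1), x ^ ((k + 1).choose 2) * (z * x) ^ (k + 1) * qb x M (k + 1) := by
      have h2 := Finset.sum_range_succ (fun k => x ^ (k.choose 2) * (z * x) ^ k * qb x M k) (M + 1)
      rw [qb_eq_zero x M (M + 1) (by omega), mul_zero, add_zero] at h2
      rw [← h2, Finset.sum_range_succ']
      simp [qb_zero_right, add_comm]
    have h3 : ∀ k : ℕ, (k + 1).choose 2 = k + k.choose 2 := fun k => by
      rw [Nat.choose_succ_succ' k 1, Nat.choose_one_right]
    simp only [pow_zero, mul_one, Nat.choose_zero_succ]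
    rw [mul_add, mul_one]
    nth_rewrite 1 [h1]
    rw [Finset.sum_mul, add_assoc, ← Finset.sum_add_distrib, add_comm]
    congr 1
    refine Finset.sum_congr rfl fun k _ => ?_
    simp only [h3, pow_add, mul_pow]
    ring

lemma PP_pos {x : ℝ} (h0 : 0 ≤ x) (h1 : x < 1) (N : ℕ) : 0 < PP x N :=
  Finset.prod_pos fun k _ => by
    have := pow_lt_one₀ h0 h1 (Nat.succ_ne_zero k)
    simpa using this

lemma summ_pow {x : ℝ} (h0 : 0 ≤ x) (h1 : x < 1) : Summable fun k : ℕ => x ^ (k + 1) :=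
  (summable_nat_add_iff 1).2 (summable_geometric_of_lt_one h0 h1)

lemma hasProd_EE {x : ℝ} (h0 : 0 ≤ x) (h1 : x < 1) :
    HasProd (fun k : ℕ => 1 - x ^ (k + 1)) (EE x) := by
  have := Real.multipliable_one_add_of_summable (summ_pow h0 h1).neg
  simp only [← sub_eq_add_neg] at this
  exact this.hasProd

lemma EE_pos {x : ℝ} (h0 : 0 ≤ x) (h1 : x < 1) : 0 < EE x := by
  have := Real.summable_log_one_add_of_summable (summ_pow h0 h1).neg
  simp only [← sub_eq_add_neg] at this
  rw [EE, ← Real.rexp_tsum_eq_tprod _ this]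
  · positivity
  · intro k
    have := pow_lt_one₀ h0 h1 (Nat.succ_ne_zero k)
    simpa using this

lemma PP_tendsto {x : ℝ} (h0 : 0 ≤ x) (h1 : x < 1) : Tendsto (PP x) atTop (𝓝 (EE x)) :=
  (hasProd_EE h0 h1).tendsto_prod_nat

lemma PP_anti {x : ℝ} (h0 : 0 ≤ x) (h1 : x < 1) : Antitone (PP x) := by
  refine antitone_nat_of_succ_le fun n => ?_
  rw [PP_succ]
  have := PP_pos h0 h1 n
  have h2 : 0 ≤ x ^ (n + 1) := by positivity
  nlinarith

lemma PP_le_one {x : ℝ} (h0 : 0 ≤ x) (h1 : x < 1) (N : ℕ) : PP x N ≤ 1 := by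
  simpa [PP_zero] using PP_anti h0 h1 (Nat.zero_le N)

lemma EE_le_PP {x : ℝ} (h0 : 0 ≤ x) (h1 : x < 1) (N : ℕ) : EE x ≤ PP x N :=
  (PP_anti h0 h1).le_of_tendsto (PP_tendsto h0 h1) N

/-- centred coefficients. -/
noncomputable def cc (x : ℝ) (N : ℕ) (n : ℤ) : ℝ :=
  if -(N : ℤ) ≤ n then qb x (2 * N) (N + n).toNat else 0

lemma cc_eq {x : ℝ} (h0 : 0 ≤ x) (h1 : x < 1) (N : ℕ) (n : ℤ) (hn : n.natAbs ≤ N) :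
    cc x N n = PP x (2 * N) / (PP x (N + n).toNat * PP x (N - n).toNat) := by
  have h := qb_mul x (N + n).toNat (N - n).toNat
  rw [show (N + n).toNat + (N - n).toNat = 2 * N by omega] at h
  rw [cc, if_pos (by omega), ← h]
  have := (PP_pos h0 h1 (N + n).toNat).ne'
  have := (PP_pos h0 h1 (N - n).toNat).ne'
  field_simp

lemma cc_eq_zero (x : ℝ) (N : ℕ) (n : ℤ) (hn : N < n.natAbs) : cc x N n = 0 := by
  rw [cc]; split_ifs with h
  · exact qb_eq_zero _ _ _ (by omega)
  · rfl

lemma cc_bound {x : ℝ} (h0 : 0 ≤ x) (h1 : x < 1) (N : ℕ) (n : ℤ) :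
    |cc x N n| ≤ 1 / (EE x) ^ 2 := by
  have hE := EE_pos h0 h1
  by_cases hn : n.natAbs ≤ N
  · rw [cc_eq h0 h1 N n hn]
    have a := PP_pos h0 h1 (N + n).toNat
    have b := PP_pos h0 h1 (N - n).toNat
    have c := PP_pos h0 h1 (2 * N)
    rw [abs_of_pos (by positivity), sq]
    exact div_le_div₀ zero_le_one (PP_le_one h0 h1 _) (by positivity)
      (mul_le_mul (EE_le_PP h0 h1 _) (EE_le_PP h0 h1 _) hE.le a.le)
  · rw [cc_eq_zero x N n (by omega)]; simp; positivity

lemma cc_tendsto {x : ℝ} (h0 : 0 ≤ x) (h1 : x < 1) (n : ℤ) :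
    Tendsto (fun N => cc x N n) atTop (𝓝 (1 / EE x)) := by
  have hE := EE_pos h0 h1
  have hP := PP_tendsto h0 h1
  have t1 : Tendsto (fun N : ℕ => 2 * N) atTop atTop :=
    tendsto_atTop_mono (fun N => by simp only [id]; omega) tendsto_id
  have t2 : Tendsto (fun N : ℕ => ((N : ℤ) + n).toNat) atTop atTop :=
    tendsto_atTop.2 fun b => by
      filter_upwards [eventually_ge_atTop (b + n.natAbs)] with N hN; omega
  have t3 : Tendsto (fun N : ℕ => ((N : ℤ) - n).toNat) atTop atTop :=
    tendsto_atTop.2 fun b => by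
      filter_upwards [eventually_ge_atTop (b + n.natAbs)] with N hN; omega
  have := (hP.comp t1).div ((hP.comp t2).mul (hP.comp t3)) (by positivity)
  rw [show EE x / (EE x * EE x) = 1 / EE x by field_simp] at this
  refine this.congr' ?_
  filter_upwards [eventually_ge_atTop n.natAbs] with N hN
  simp [cc_eq h0 h1 N n hN]

lemma tannery {x : ℝ} (h0 : 0 ≤ x) (h1 : x < 1) (f : ℤ → ℝ) (hf : Summable f) :
    Tendsto (fun N => ∑' n, cc x N n * f n) atTop (𝓝 (1 / EE x * ∑' n, f n)) := by
  rw [← tsum_mul_left]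
  refine tendsto_tsum_of_dominated_convergence (bound := fun n => 1 / (EE x) ^ 2 * |f n|)
    (hf.abs.mul_left _) (fun n => (cc_tendsto h0 h1 n).mul_const _) (.of_forall fun N n => ?_)
  rw [norm_mul]
  exact mul_le_mul_of_nonneg_right (cc_bound h0 h1 N n) (abs_nonneg _)

lemma cc_sum (x : ℝ) (N : ℕ) (f : ℤ → ℝ) :
    ∑' n, cc x N n * f n = ∑ k ∈ Finset.range (2 * N + 1), qb x (2 * N) k * f (k - N) := by
  rw [tsum_eq_sum (s := (Finset.range (2 * N + 1)).image (fun k : ℕ => (k : ℤ) - N)),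
    Finset.sum_image]
  · refine Finset.sum_congr rfl fun k _ => ?_
    rw [cc, if_pos (by omega)]; congr 2; omega
  · intro a _ b _ h; simpa using h
  · intro n hn
    rw [cc_eq_zero, zero_mul]
    by_contra h
    refine hn (Finset.mem_image.2 ⟨(n + N).toNat, ?_, ?_⟩)
    · simp; omega
    · omega

lemma pow_choose (y : ℝ) (hy : y ≠ 0) (k : ℕ) : (y ^ 2) ^ (k.choose 2) = y ^ ((k : ℤ) * k - k) := by
  induction k with
  | zero => simp
  | succ k ih =>
    rw [Nat.choose_succ_succ' k 1, Nat.choose_one_right, pow_add, ih, ← pow_mul, ← zpow_natCast,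
      ← zpow_add₀ hy]
    congr 1; push_cast; ring

lemma negprod (y w : ℝ) (hy : y ≠ 0) (hw : w ≠ 0) (N : ℕ) :
    ∏ k ∈ Finset.range N, (1 + w * y ^ (-2 * (N : ℤ)) * (y ^ 2) ^ k) =
      w ^ N * y ^ (-((N : ℤ) * N + N)) * ∏ k ∈ Finset.range N, (1 + w⁻¹ * (y ^ 2) ^ (k + 1)) := by
  induction N with
  | zero => simp
  | succ N ih =>
    rw [Finset.prod_range_succ', Finset.prod_range_succ (fun k => (1 + w⁻¹ * (y ^ 2) ^ (k + 1)))]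
    have e : ∀ k : ℕ, 1 + w * y ^ (-2 * ((N + 1 : ℕ) : ℤ)) * (y ^ 2) ^ (k + 1) =
        1 + w * y ^ (-2 * (N : ℤ)) * (y ^ 2) ^ k := fun k => by
      have : y ^ (-2 * (N : ℤ)) = y ^ (-2 * ((N + 1 : ℕ) : ℤ)) * y ^ 2 := by
        rw [← zpow_natCast, ← zpow_add₀ hy]; congr 1; push_cast; ring
      rw [this]; ring
    simp only [e, ih]
    have e2 : y ^ (-(((N + 1 : ℕ) : ℤ) * (N + 1 : ℕ) + (N + 1 : ℕ))) =
        y ^ (-((N : ℤ) * N + N)) * y ^ (-2 * ((N + 1 : ℕ) : ℤ)) := by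
      rw [← zpow_add₀ hy]; congr 1; push_cast; ring
    have e3 : y ^ (-2 * ((N + 1 : ℕ) : ℤ)) * (y ^ 2) ^ (N + 1) = 1 := by
      rw [← pow_mul, ← zpow_natCast, ← zpow_add₀ hy]; convert zpow_zero y using 2; push_cast; ring
    have e4 : 1 + w * y ^ (-2 * ((N + 1 : ℕ) : ℤ)) * (y ^ 2) ^ 0 =
        w * y ^ (-2 * ((N + 1 : ℕ) : ℤ)) * (1 + w⁻¹ * (y ^ 2) ^ (N + 1)) := by
      rw [mul_add, show w * y ^ (-2 * ((N + 1 : ℕ) : ℤ)) * (w⁻¹ * (y ^ 2) ^ (N + 1)) =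
        (w * w⁻¹) * (y ^ (-2 * ((N + 1 : ℕ) : ℤ)) * (y ^ 2) ^ (N + 1)) by ring, e3,
        mul_inv_cancel₀ hw]
      ring
    rw [e4, e2]; ring

lemma finJTP (y w : ℝ) (hy : y ≠ 0) (hw : w ≠ 0) (N : ℕ) :
    (∏ k ∈ Finset.range N, (1 + w * (y ^ 2) ^ k)) *
      ∏ k ∈ Finset.range N, (1 + w⁻¹ * (y ^ 2) ^ (k + 1)) =
    ∑ k ∈ Finset.range (2 * N + 1), qb (y ^ 2) (2 * N) k *
      (w ^ ((k : ℤ) - N) * y ^ (((k : ℤ) - N) * (k - N) - (k - N))) := by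
  have h := gauss (y ^ 2) (2 * N) (w * y ^ (-2 * (N : ℤ)))
  rw [two_mul, Finset.prod_range_add, negprod y w hy hw, ← two_mul] at h
  have e : ∀ k : ℕ, 1 + w * y ^ (-2 * (N : ℤ)) * (y ^ 2) ^ (N + k) = 1 + w * (y ^ 2) ^ k := by
    intro k
    have : y ^ (-2 * (N : ℤ)) * (y ^ 2) ^ N = 1 := by
      rw [← pow_mul, ← zpow_natCast, ← zpow_add₀ hy]; convert zpow_zero y using 2; push_cast; ring
    rw [pow_add, show w * y ^ (-2 * (N : ℤ)) * ((y ^ 2) ^ N * (y ^ 2) ^ k) =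
      w * (y ^ (-2 * (N : ℤ)) * (y ^ 2) ^ N) * (y ^ 2) ^ k by ring, this]
    ring
  simp only [e] at h
  have hc : w ^ N * y ^ (-((N : ℤ) * N + N)) ≠ 0 := by positivity
  apply mul_left_cancel₀ hc
  rw [← mul_assoc, mul_right_comm, h, Finset.mul_sum]
  refine Finset.sum_congr rfl fun k _ => ?_
  rw [pow_choose y hy, mul_pow, ← zpow_natCast w N, ← zpow_natCast w k, ← zpow_natCast (y ^ _) k,
    ← zpow_mul]
  have e1 : w ^ (k : ℤ) = w ^ (N : ℤ) * w ^ ((k : ℤ) - N) := by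
    rw [← zpow_add₀ hw]; congr 1; ring
  have e2 : y ^ ((k : ℤ) * k - k) * y ^ (-2 * (N : ℤ) * k) = y ^ (-((N : ℤ) * N + N)) *
      y ^ (((k : ℤ) - N) * (k - N) - (k - N)) := by
    rw [← zpow_add₀ hy, ← zpow_add₀ hy]; congr 1; ring
  rw [e1]
  linear_combination (w ^ (N : ℤ) * w ^ ((k : ℤ) - N)) * qb (y ^ 2) (2 * N) k * e2

lemma finJTP' (y w : ℝ) (hy : y ≠ 0) (hw : w ≠ 0) (N : ℕ) :
    (∏ k ∈ Finset.range N, (1 + w * (y ^ 2) ^ k)) *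
      ∏ k ∈ Finset.range N, (1 + w⁻¹ * (y ^ 2) ^ (k + 1)) =
    ∑' n : ℤ, cc (y ^ 2) N n * (w ^ n * y ^ (n * n - n)) := by
  rw [finJTP y w hy hw, cc_sum]

/-- derivative at `w = -1`. -/
lemma finJ3 (y : ℝ) (hy : y ≠ 0) (N : ℕ) :
    PP (y ^ 2) N * PP (y ^ 2) (N + 1) =
    ∑' n : ℤ, cc (y ^ 2) (N + 1) n * ((n : ℝ) * (-1) ^ (n - 1) * y ^ (n * n - n)) := by
  rw [cc_sum]
  set G : ℝ → ℝ := fun w => (∏ k ∈ Finset.range N, (1 + w * (y ^ 2) ^ (k + 1))) *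
      ∏ k ∈ Finset.range (N + 1), (1 + w⁻¹ * (y ^ 2) ^ (k + 1)) with hG
  have hGc : ContinuousAt G (-1) := by
    refine ContinuousAt.mul (by fun_prop) ?_
    refine tendsto_finsetProd _ fun k _ => ?_
    exact ContinuousAt.add continuousAt_const
      ((continuousAt_inv₀ (by norm_num)).mul continuousAt_const)
  have hd1 : HasDerivAt (fun w => (w + 1) * G w) (G (-1)) (-1) := by
    rw [hasDerivAt_iff_tendsto_slope]
    refine (hGc.tendsto.mono_left nhdsWithin_le_nhds).congr' ?_
    filter_upwards [self_mem_nhdsWithin] with w hw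
    have : w + 1 ≠ 0 := fun h => hw (by simp; linarith)
    simp [slope_def_field]
    field_simp
  have hd2 : HasDerivAt (fun w : ℝ => ∑ k ∈ Finset.range (2 * (N + 1) + 1), qb (y ^ 2) (2 * (N + 1)) k *
      (w ^ ((k : ℤ) - (N + 1 : ℕ)) * y ^ (((k : ℤ) - (N + 1 : ℕ)) * (k - (N + 1 : ℕ)) - (k - (N + 1 : ℕ)))))
      (∑ k ∈ Finset.range (2 * (N + 1) + 1), qb (y ^ 2) (2 * (N + 1)) k *
      ((((k : ℤ) - (N + 1 : ℕ) : ℤ) : ℝ) * (-1) ^ ((k : ℤ) - (N + 1 : ℕ) - 1) *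
        y ^ (((k : ℤ) - (N + 1 : ℕ)) * (k - (N + 1 : ℕ)) - (k - (N + 1 : ℕ))))) (-1) := by
    refine HasDerivAt.fun_sum fun k _ => ?_
    exact ((hasDerivAt_zpow _ _ (Or.inl (by norm_num))).mul_const _).const_mul _
  have heq : (fun w => (w + 1) * G w) =ᶠ[𝓝 (-1)] (fun w : ℝ => ∑ k ∈ Finset.range (2 * (N + 1) + 1), qb (y ^ 2) (2 * (N + 1)) k *
      (w ^ ((k : ℤ) - (N + 1 : ℕ)) * y ^ (((k : ℤ) - (N + 1 : ℕ)) * (k - (N + 1 : ℕ)) - (k - (N + 1 : ℕ))))) := by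
    filter_upwards [isOpen_ne.mem_nhds (show (-1 : ℝ) ≠ 0 by norm_num)] with w hw
    rw [← finJTP y w hy hw (N + 1), Finset.prod_range_succ', hG]
    ring
  have h := hd1.unique (hd2.congr_of_eventuallyEq heq)
  rw [← h, hG]
  simp only [PP]
  congr 1 <;> refine Finset.prod_congr rfl fun k _ => ?_
  · ring
  · norm_num; ring

lemma summ_int (k : ℕ) {r : ℝ} (h0 : 0 ≤ r) (h1 : r < 1) :
    Summable fun n : ℤ => |(n : ℝ)| ^ k * r ^ n.natAbs := by
  have h := summable_pow_mul_geometric_of_norm_lt_one k (r := r) (by rwa [Real.norm_of_nonneg h0])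
  refine Summable.of_nat_of_neg ?_ ?_ <;> simpa using h

lemma summ_y (k : ℕ) {y : ℝ} (h0 : 0 < y) (h1 : y < 1) :
    Summable fun n : ℤ => |(n : ℝ)| ^ k * y ^ (n * n - n) := by
  refine Summable.of_nonneg_of_le (fun n => by positivity) (fun n => ?_)
    ((summ_int k h0.le h1).mul_left y⁻¹)
  have : y ^ (n * n - n) ≤ y⁻¹ * y ^ n.natAbs := by
    rw [← zpow_natCast, ← zpow_neg_one, ← zpow_add₀ h0.ne']
    apply zpow_le_zpow_right_of_le_one₀ h0 h1.le
    rcases lt_or_ge 0 n with h | h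
    · rw [Int.natCast_natAbs, abs_of_pos h]; nlinarith
    · rw [Int.natCast_natAbs, abs_of_nonpos h]; nlinarith
  calc _ ≤ |(n : ℝ)| ^ k * (y⁻¹ * y ^ n.natAbs) := by gcongr
    _ = _ := by ring

lemma abs_sgn (n : ℤ) : |(-1 : ℝ) ^ n| = 1 := by simp [abs_zpow]

lemma jtp (y w L : ℝ) (h0 : 0 < y) (h1 : y < 1) (hw : w ≠ 0)
    (hs : Summable fun n : ℤ => w ^ n * y ^ (n * n - n))
    (hL : Tendsto (fun N => (∏ k ∈ Finset.range N, (1 + w * (y ^ 2) ^ k)) *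
      ∏ k ∈ Finset.range N, (1 + w⁻¹ * (y ^ 2) ^ (k + 1))) atTop (𝓝 L)) :
    ∑' n : ℤ, w ^ n * y ^ (n * n - n) = EE (y ^ 2) * L := by
  have hx0 : 0 ≤ y ^ 2 := by positivity
  have hx1 : y ^ 2 < 1 := pow_lt_one₀ h0.le h1 (by norm_num)
  have h := tannery hx0 hx1 _ hs
  simp only [← finJTP' y w h0.ne' hw] at h
  have := tendsto_nhds_unique h hL
  have hE := (EE_pos hx0 hx1).ne'
  rw [← this]; field_simp

lemma jac3 (y : ℝ) (h0 : 0 < y) (h1 : y < 1) :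
    ∑' n : ℤ, (n : ℝ) * (-1) ^ (n - 1) * y ^ (n * n - n) = EE (y ^ 2) ^ 3 := by
  have hx0 : 0 ≤ y ^ 2 := by positivity
  have hx1 : y ^ 2 < 1 := pow_lt_one₀ h0.le h1 (by norm_num)
  have hs : Summable fun n : ℤ => (n : ℝ) * (-1) ^ (n - 1) * y ^ (n * n - n) := by
    refine Summable.of_norm ((summ_y 1 h0 h1).congr fun n => ?_)
    rw [norm_mul, norm_mul, Real.norm_eq_abs, Real.norm_eq_abs, abs_sgn, Real.norm_eq_abs,
      abs_of_pos (zpow_pos h0 _)]; ring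
  have h := (tannery hx0 hx1 _ hs).comp (tendsto_add_atTop_nat 1)
  have h2 : Tendsto (fun N => PP (y ^ 2) N * PP (y ^ 2) (N + 1)) atTop
      (𝓝 (EE (y ^ 2) * EE (y ^ 2))) :=
    (PP_tendsto hx0 hx1).mul ((PP_tendsto hx0 hx1).comp (tendsto_add_atTop_nat 1))
  have h3 := tendsto_nhds_unique (h.congr fun N => (finJ3 y h0.ne' N).symm) h2
  have hE := (EE_pos hx0 hx1).ne'
  field_simp at h3
  rw [h3]

lemma summ_sgn {y : ℝ} (h0 : 0 < y) (h1 : y < 1) :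
    Summable fun n : ℤ => (-1 : ℝ) ^ n * y ^ (n * n - n) := by
  refine Summable.of_norm ((summ_y 0 h0 h1).congr fun n => ?_)
  rw [norm_mul, Real.norm_eq_abs, abs_sgn, Real.norm_eq_abs, abs_of_pos (zpow_pos h0 _)]; ring

lemma jac0 (y : ℝ) (h0 : 0 < y) (h1 : y < 1) :
    ∑' n : ℤ, (-1 : ℝ) ^ n * y ^ (n * n - n) = 0 := by
  rw [jtp y (-1) 0 h0 h1 (by norm_num) (summ_sgn h0 h1), mul_zero]
  refine tendsto_const_nhds.congr' ?_
  filter_upwards [eventually_ge_atTop 1] with N hN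
  rw [Finset.prod_eq_zero (i := 0) (by simp; omega) (by norm_num), zero_mul]

lemma jac3' (y : ℝ) (h0 : 0 < y) (h1 : y < 1) :
    ∑' n : ℤ, (2 * n - 1 : ℝ) * (-1) ^ n * y ^ (n * n - n) = - 2 * EE (y ^ 2) ^ 3 := by
  have hs : Summable fun n : ℤ => (n : ℝ) * (-1) ^ (n - 1) * y ^ (n * n - n) := by
    refine Summable.of_norm ((summ_y 1 h0 h1).congr fun n => ?_)
    rw [norm_mul, norm_mul, Real.norm_eq_abs, Real.norm_eq_abs, abs_sgn, Real.norm_eq_abs,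
      abs_of_pos (zpow_pos h0 _)]; ring
  rw [← jac3 y h0 h1, ← tsum_mul_left, ← sub_zero (∑' n : ℤ, -2 * _), ← jac0 y h0 h1,
    ← (hs.mul_left _).tsum_sub (summ_sgn h0 h1)]
  refine tsum_congr fun n => ?_
  rw [zpow_sub₀ (by norm_num : (-1 : ℝ) ≠ 0)]
  generalize y ^ (n * n - n) = Y
  norm_num; ring

lemma jac2 (y : ℝ) (h0 : 0 < y) (h1 : y < 1) :
    ∑' n : ℤ, y ^ (n * n - n) = 2 * EE (y ^ 4) ^ 2 / EE (y ^ 2) := by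
  have hx0 : 0 ≤ y ^ 2 := by positivity
  have hx1 : y ^ 2 < 1 := pow_lt_one₀ h0.le h1 (by norm_num)
  have hz0 : 0 ≤ y ^ 4 := by positivity
  have hz1 : y ^ 4 < 1 := pow_lt_one₀ h0.le h1 (by norm_num)
  have hE := (EE_pos hx0 hx1).ne'
  have f1 : ∀ N, ∏ k ∈ Finset.range N, (1 + (y ^ 2) ^ (k + 1)) = PP (y ^ 4) N / PP (y ^ 2) N := by
    intro N
    rw [eq_div_iff (PP_pos hx0 hx1 N).ne', PP, PP, ← Finset.prod_mul_distrib]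
    refine Finset.prod_congr rfl fun k _ => ?_
    ring
  have t1 : Tendsto (fun N => ∏ k ∈ Finset.range N, (1 + (y ^ 2) ^ (k + 1))) atTop
      (𝓝 (EE (y ^ 4) / EE (y ^ 2))) := by
    simp only [f1]; exact (PP_tendsto hz0 hz1).div (PP_tendsto hx0 hx1) hE
  have t2 : Tendsto (fun N => ∏ k ∈ Finset.range N, (1 + (y ^ 2) ^ k)) atTop
      (𝓝 (EE (y ^ 4) / EE (y ^ 2) * 2)) := by
    rw [← tendsto_add_atTop_iff_nat 1]
    refine (t1.mul_const 2).congr fun N => ?_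
    rw [Finset.prod_range_succ']; norm_num
  have h := jtp y 1 (EE (y ^ 4) / EE (y ^ 2) * 2 * (EE (y ^ 4) / EE (y ^ 2))) h0 h1 one_ne_zero
    (by simpa using summ_y 0 h0 h1) (by simpa using t2.mul t1)
  simp only [one_zpow, one_mul] at h
  rw [h]; field_simp

lemma prod_odd {q : ℝ} (h0 : 0 < q) (h1 : q < 1) (N : ℕ) :
    ∏ k ∈ Finset.range N, (1 - q ^ (2 * k + 1)) = PP q (2 * N) / PP (q ^ 2) N := by
  have hx1 : q ^ 2 < 1 := pow_lt_one₀ h0.le h1 (by norm_num)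
  rw [eq_div_iff (PP_pos (by positivity) hx1 N).ne']
  induction N with
  | zero => simp [PP]
  | succ N ih =>
    rw [Finset.prod_range_succ, PP_succ, show 2 * (N + 1) = 2 * N + 1 + 1 by ring, PP_succ,
      PP_succ, ← ih]
    ring

lemma tendsto_odd {q : ℝ} (h0 : 0 < q) (h1 : q < 1) :
    Tendsto (fun N => ∏ k ∈ Finset.range N, (1 - q ^ (2 * k + 1))) atTop
      (𝓝 (EE q / EE (q ^ 2))) := by
  have hx1 : q ^ 2 < 1 := pow_lt_one₀ h0.le h1 (by norm_num)
  have t1 : Tendsto (fun N : ℕ => 2 * N) atTop atTop :=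
    tendsto_atTop_mono (fun N => by simp only [id]; omega) tendsto_id
  simp only [prod_odd h0 h1]
  exact ((PP_tendsto h0.le h1).comp t1).div (PP_tendsto (by positivity) hx1)
    (EE_pos (by positivity) hx1).ne'

lemma tendsto_odd' {q : ℝ} (h0 : 0 < q) (h1 : q < 1) :
    Tendsto (fun N => ∏ k ∈ Finset.range N, (1 + q ^ (2 * k + 1))) atTop
      (𝓝 (EE (q ^ 2) ^ 2 / (EE q * EE (q ^ 4)))) := by
  have hx1 : q ^ 2 < 1 := pow_lt_one₀ h0.le h1 (by norm_num)
  have hz1 : q ^ 4 < 1 := pow_lt_one₀ h0.le h1 (by norm_num)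
  have e1 := EE_pos h0.le h1
  have e2 := EE_pos (by positivity) hx1
  have e4 := EE_pos (by positivity) hz1
  have := (tendsto_odd (q := q ^ 2) (by positivity) hx1).div (tendsto_odd h0 h1) (by positivity)
  rw [← pow_mul] at this
  norm_num only at this
  rw [show EE (q ^ 2) ^ 2 / (EE q * EE (q ^ 4)) = EE (q ^ 2) / EE (q ^ 4) / (EE q / EE (q ^ 2)) by
    field_simp]
  refine this.congr fun N => ?_
  simp only [Pi.div_apply]
  rw [div_eq_iff, ← Finset.prod_mul_distrib]
  · refine Finset.prod_congr rfl fun k _ => ?_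
    ring
  · exact Finset.prod_ne_zero_iff.2 fun k _ => by
      have := pow_lt_one₀ h0.le h1 (show 2 * k + 1 ≠ 0 by omega)
      linarith

/-- theta function. -/
noncomputable def th (s q : ℝ) : ℝ := ∑' n : ℤ, s ^ n * q ^ (n.natAbs ^ 2)

lemma th_eq {s q : ℝ} (h0 : 0 < q) :
    th s q = ∑' n : ℤ, (s * q) ^ n * q ^ (n * n - n) := by
  refine tsum_congr fun n => ?_
  rw [mul_zpow, mul_assoc, ← zpow_add₀ h0.ne', ← zpow_natCast q (n.natAbs ^ 2)]
  congr 2; push_cast; rw [sq_abs]; ring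

lemma summ_q (k : ℕ) {q : ℝ} (h0 : 0 ≤ q) (h1 : q < 1) :
    Summable fun n : ℤ => |(n : ℝ)| ^ k * q ^ (n.natAbs ^ 2) := by
  refine Summable.of_nonneg_of_le (fun n => by positivity) (fun n => ?_) (summ_int k h0 h1)
  have : q ^ (n.natAbs ^ 2) ≤ q ^ n.natAbs :=
    pow_le_pow_of_le_one h0 h1.le (Nat.le_self_pow (by norm_num) _)
  gcongr

lemma abs_szpow {s : ℝ} (hs : s = 1 ∨ s = -1) (n : ℤ) : |s ^ n| = 1 := by
  rcases hs with rfl | rfl <;> simp [abs_zpow]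

lemma summ_th {s q : ℝ} (k : ℕ) (h0 : 0 ≤ q) (h1 : q < 1) (hs : s = 1 ∨ s = -1) :
    Summable fun n : ℤ => (n : ℝ) ^ k * (s ^ n * q ^ (n.natAbs ^ 2)) := by
  refine Summable.of_norm ((summ_q k h0 h1).congr fun n => ?_)
  rw [norm_mul, norm_mul, norm_pow, Real.norm_eq_abs, Real.norm_eq_abs, abs_szpow hs,
    Real.norm_of_nonneg (pow_nonneg h0 _)]; ring

lemma th_aux {s q L : ℝ} (h0 : 0 < q) (h1 : q < 1) (hs : s = 1 ∨ s = -1)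
    (hL : Tendsto (fun N => ∏ k ∈ Finset.range N, (1 + s * q ^ (2 * k + 1))) atTop (𝓝 L)) :
    th s q = EE (q ^ 2) * (L * L) := by
  have hss : s⁻¹ = s := by rcases hs with rfl | rfl <;> norm_num
  have hsn : s ≠ 0 := by rcases hs with rfl | rfl <;> norm_num
  rw [th_eq h0]
  refine jtp q (s * q) (L * L) h0 h1 (mul_ne_zero hsn h0.ne') ?_ ?_
  · refine (summ_th 0 h0.le h1 hs).congr fun n => ?_
    rw [mul_zpow, mul_assoc, ← zpow_add₀ h0.ne', ← zpow_natCast q (n.natAbs ^ 2), pow_zero, one_mul]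
    congr 2; push_cast; rw [sq_abs]; ring
  · refine (hL.mul hL).congr fun N => ?_
    congr 1 <;> refine Finset.prod_congr rfl fun k _ => ?_
    · ring
    · rw [mul_inv, hss, ← pow_mul, show 2 * (k + 1) = 2 * k + 1 + 1 by ring, pow_succ q (2 * k + 1)]
      field_simp

lemma th3_eq {q : ℝ} (h0 : 0 < q) (h1 : q < 1) :
    th 1 q = EE (q ^ 2) ^ 5 / (EE q ^ 2 * EE (q ^ 4) ^ 2) := by
  rw [th_aux h0 h1 (Or.inl rfl) (by simpa using tendsto_odd' h0 h1)]
  ring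

lemma th4_eq {q : ℝ} (h0 : 0 < q) (h1 : q < 1) :
    th (-1) q = EE q ^ 2 / EE (q ^ 2) := by
  have e2 := EE_pos (by positivity) (pow_lt_one₀ h0.le h1 (n := 2) (by norm_num))
  rw [th_aux h0 h1 (Or.inr rfl) (by simpa [← sub_eq_add_neg] using tendsto_odd h0 h1)]
  field_simp

lemma oddsum (g : ℤ × ℤ → ℝ) (hg : ∀ a b, Even (a + b) → g (a, b) = 0) :
    ∑' p, g p = ∑' p : ℤ × ℤ, g (p.1 + p.2 - 1, p.1 - p.2) := by
  have hi : Function.Injective (fun p : ℤ × ℤ => ((p.1 + p.2 - 1, p.1 - p.2) : ℤ × ℤ)) := by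
    rintro ⟨a, b⟩ ⟨c, d⟩ h
    simp only [Prod.mk.injEq] at h ⊢
    omega
  rw [← hi.tsum_eq]
  rintro ⟨a, b⟩ h
  have h2 : ¬ Even (a + b) := fun h' => h (hg a b h')
  rw [Int.not_even_iff_odd] at h2
  obtain ⟨m, hm⟩ := h2
  exact ⟨(m + 1, m + 1 - b), by simp only [Prod.mk.injEq]; omega⟩

lemma Q_mul {q : ℝ} (h0 : 0 < q) (m n : ℤ) :
    q ^ ((m + n - 1).natAbs ^ 2) * q ^ ((m - n).natAbs ^ 2) =
      q * ((q ^ 2) ^ (m * m - m) * (q ^ 2) ^ (n * n - n)) := by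
  have e : ∀ k : ℤ, (q ^ 2) ^ k = q ^ (2 * k) := fun k => by rw [← zpow_natCast, ← zpow_mul]; rfl
  rw [e, e, ← zpow_natCast, ← zpow_natCast, ← zpow_add₀ h0.ne', ← zpow_add₀ h0.ne',
    ← zpow_one_add₀ h0.ne']
  congr 1; push_cast; rw [sq_abs, sq_abs]; ring

lemma sgn_cases (a b : ℤ) (h : Even (a + b)) : (-1 : ℝ) ^ a = (-1) ^ b := by
  have : (-1 : ℝ) ^ (a + b) = 1 := h.neg_one_zpow
  rw [zpow_add₀ (by norm_num)] at this
  rcases Int.even_or_odd a with ha | ha <;> rcases Int.even_or_odd b with hb | hb <;>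
    simp_all [ha.neg_one_zpow, hb.neg_one_zpow]

lemma sq_diff {q : ℝ} (h0 : 0 < q) (h1 : q < 1) :
    th 1 q ^ 2 - th (-1) q ^ 2 = 2 * q * (∑' n : ℤ, (q ^ 2) ^ (n * n - n)) ^ 2 := by
  have hx1 : q ^ 2 < 1 := pow_lt_one₀ h0.le h1 (by norm_num)
  have s3 := summ_th 0 h0.le h1 (s := 1) (Or.inl rfl)
  have s4 := summ_th 0 h0.le h1 (s := -1) (Or.inr rfl)
  have s2 := summ_y 0 (y := q ^ 2) (by positivity) hx1
  simp only [pow_zero, one_mul] at s3 s4 s2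
  rw [sq, sq, th, th, tsum_mul_tsum_of_summable_norm s3.norm s3.norm,
    tsum_mul_tsum_of_summable_norm s4.norm s4.norm,
    ← (summable_mul_of_summable_norm s3.norm s3.norm).tsum_sub
      (summable_mul_of_summable_norm s4.norm s4.norm),
    sq, tsum_mul_tsum_of_summable_norm s2.norm s2.norm, ← tsum_mul_left, oddsum]
  · refine tsum_congr fun p => ?_
    obtain ⟨m, n⟩ := p
    simp only [one_zpow, one_mul]
    have hQ := Q_mul h0 m n
    have hs : (-1 : ℝ) ^ (m + n - 1) * (-1) ^ (m - n) = -1 := by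
      rw [← zpow_add₀ (by norm_num)]; exact Odd.neg_one_zpow ⟨m - 1, by ring⟩
    linear_combination 2 * hQ - (q ^ ((m + n - 1).natAbs ^ 2) * q ^ ((m - n).natAbs ^ 2)) * hs
  · intro a b h
    have hs : (-1 : ℝ) ^ a * (-1) ^ b = 1 := by
      rw [← zpow_add₀ (by norm_num)]; exact h.neg_one_zpow
    simp only [one_zpow, one_mul]
    linear_combination (-(q ^ (a.natAbs ^ 2) * q ^ (b.natAbs ^ 2))) * hs

/-- `q` times the derivative of theta. -/
noncomputable def dth (s q : ℝ) : ℝ := ∑' n : ℤ, (n : ℝ) ^ 2 * (s ^ n * q ^ (n.natAbs ^ 2))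

set_option maxHeartbeats 1000000 in
lemma wronsk {q : ℝ} (h0 : 0 < q) (h1 : q < 1) :
    dth 1 q * th (-1) q - th 1 q * dth (-1) q =
      q * (∑' n : ℤ, (2 * n - 1 : ℝ) * (-1) ^ n * (q ^ 2) ^ (n * n - n)) ^ 2 := by
  have hx1 : q ^ 2 < 1 := pow_lt_one₀ h0.le h1 (by norm_num)
  have s3 := summ_th 0 h0.le h1 (s := 1) (Or.inl rfl)
  have s4 := summ_th 0 h0.le h1 (s := -1) (Or.inr rfl)
  have d3 := summ_th 2 h0.le h1 (s := 1) (Or.inl rfl)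
  have d4 := summ_th 2 h0.le h1 (s := -1) (Or.inr rfl)
  have s2 : Summable fun n : ℤ => (2 * n - 1 : ℝ) * (-1) ^ n * (q ^ 2) ^ (n * n - n) := by
    have a := summ_y 0 (y := q ^ 2) (by positivity) hx1
    have b := summ_y 1 (y := q ^ 2) (by positivity) hx1
    refine Summable.of_norm_bounded ((b.mul_left 2).add a) fun n => ?_
    rw [norm_mul, norm_mul, Real.norm_eq_abs ((-1) ^ n), abs_sgn, Real.norm_eq_abs, Real.norm_eq_abs,
      abs_of_pos (zpow_pos (by positivity : 0 < q ^ 2) _), pow_zero, pow_one, mul_one, one_mul,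
      ← mul_assoc, ← add_one_mul]
    gcongr
    calc |2 * (n : ℝ) - 1| ≤ |2 * (n : ℝ)| + |1| := abs_sub _ _
      _ = _ := by rw [abs_mul]; norm_num
  simp only [pow_zero, one_mul] at s3 s4
  have hsum : Summable fun p : ℤ × ℤ => ((p.1 : ℝ) ^ 2 * (1 ^ p.1 * q ^ (p.1.natAbs ^ 2))) *
      ((-1) ^ p.2 * q ^ (p.2.natAbs ^ 2)) - (1 ^ p.1 * q ^ (p.1.natAbs ^ 2)) *
      ((p.2 : ℝ) ^ 2 * ((-1) ^ p.2 * q ^ (p.2.natAbs ^ 2))) :=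
    (summable_mul_of_summable_norm d3.norm s4.norm).sub
      (summable_mul_of_summable_norm s3.norm d4.norm)
  rw [th, th, dth, dth, tsum_mul_tsum_of_summable_norm d3.norm s4.norm,
    tsum_mul_tsum_of_summable_norm s3.norm d4.norm,
    ← (summable_mul_of_summable_norm d3.norm s4.norm).tsum_sub
      (summable_mul_of_summable_norm s3.norm d4.norm),
    sq (∑' _, _), tsum_mul_tsum_of_summable_norm s2.norm s2.norm, ← tsum_mul_left]
  set f : ℤ × ℤ → ℝ := fun p => ((p.1 : ℝ) ^ 2 * (1 ^ p.1 * q ^ (p.1.natAbs ^ 2))) *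
      ((-1) ^ p.2 * q ^ (p.2.natAbs ^ 2)) - (1 ^ p.1 * q ^ (p.1.natAbs ^ 2)) *
      ((p.2 : ℝ) ^ 2 * ((-1) ^ p.2 * q ^ (p.2.natAbs ^ 2))) with hf
  have hsw : ∑' p : ℤ × ℤ, f p.swap = ∑' p, f p := (Equiv.prodComm ℤ ℤ).tsum_eq f
  have hsws : Summable fun p : ℤ × ℤ => f p.swap := (Equiv.prodComm ℤ ℤ).summable_iff.2 hsum
  have hav : ∑' p, f p = ∑' p, (f p + f p.swap) / 2 := by
    rw [tsum_div_const, hsum.tsum_add hsws, hsw]; ring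
  rw [hav, oddsum]
  · refine tsum_congr fun p => ?_
    obtain ⟨m, n⟩ := p
    simp only [hf, one_zpow, one_mul, Prod.swap]
    have hQ := Q_mul h0 m n
    have hs1 : (-1 : ℝ) ^ (m + n - 1) = - ((-1) ^ m * (-1) ^ n) := by
      rw [← zpow_add₀ (by norm_num), zpow_sub₀ (by norm_num), zpow_one, div_neg, div_one]
    have hs2 : (-1 : ℝ) ^ (m - n) = (-1) ^ m * (-1) ^ n := by
      rw [← zpow_add₀ (by norm_num)]; exact sgn_cases _ _ ⟨m, by ring⟩
    rw [hs1, hs2]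
    push_cast
    linear_combination ((2 * m - 1 : ℝ) * (2 * n - 1) * ((-1) ^ m * (-1) ^ n)) * hQ
  · intro a b h
    have hs := sgn_cases a b h
    simp only [hf, one_zpow, one_mul, Prod.swap, hs]
    ring

lemma th_deriv {s q : ℝ} (h0 : |q| < 1) (hs : s = 1 ∨ s = -1) :
    HasDerivAt (th s) (∑' n : ℤ, s ^ n * (((n.natAbs ^ 2 : ℕ) : ℝ) * q ^ (n.natAbs ^ 2 - 1))) q := by
  obtain ⟨r, hr0, hr1⟩ := exists_between h0
  have hrp : 0 < r := (abs_nonneg q).trans_lt hr0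
  refine hasDerivAt_tsum_of_isPreconnected (t := Set.Ioo (-r) r) (y₀ := 0)
    (u := fun n : ℤ => r⁻¹ * (|(n : ℝ)| ^ 2 * r ^ (n.natAbs ^ 2)))
    ((summ_q 2 hrp.le hr1).mul_left _) isOpen_Ioo isPreconnected_Ioo
    (g := fun n z => s ^ n * z ^ (n.natAbs ^ 2))
    (g' := fun n z => s ^ n * (((n.natAbs ^ 2 : ℕ) : ℝ) * z ^ (n.natAbs ^ 2 - 1)))
    (fun n y _ => (hasDerivAt_pow (n.natAbs ^ 2) y).const_mul (s ^ n)) ?_ ⟨by linarith, hrp⟩ ?_ (abs_lt.1 hr0)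
  · intro n y hy
    rw [norm_mul, Real.norm_eq_abs, abs_szpow hs, one_mul, norm_mul, norm_pow]
    rcases eq_or_ne n 0 with rfl | hn
    · simp
    · have h1 : n.natAbs ^ 2 = (n.natAbs ^ 2 - 1) + 1 := by
        have : 0 < n.natAbs ^ 2 := by have := Int.natAbs_pos.2 hn; positivity
        omega
      have h2 : r⁻¹ * (|(n : ℝ)| ^ 2 * r ^ (n.natAbs ^ 2)) = |(n : ℝ)| ^ 2 * r ^ (n.natAbs ^ 2 - 1) := by
        have h2 : r ^ (n.natAbs ^ 2) = r ^ (n.natAbs ^ 2 - 1) * r := by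
          rw [← pow_succ, ← h1]
        rw [h2]; field_simp
      rw [h2]
      have h3 : ‖((n.natAbs ^ 2 : ℕ) : ℝ)‖ = |(n : ℝ)| ^ 2 := by
        simp
      rw [h3]
      have : ‖y‖ ≤ r := (abs_lt.2 hy).le
      gcongr
  · simpa using summ_th 0 le_rfl zero_lt_one hs

lemma th_deriv' {s q : ℝ} (h0 : 0 < q) (h1 : q < 1) (hs : s = 1 ∨ s = -1) :
    HasDerivAt (th s) (dth s q / q) q := by
  convert th_deriv (abs_lt.2 ⟨by linarith, h1⟩) hs using 1
  rw [dth, ← tsum_div_const]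
  refine tsum_congr fun n => ?_
  rcases eq_or_ne n 0 with rfl | hn
  · simp
  · have h1 : n.natAbs ^ 2 = (n.natAbs ^ 2 - 1) + 1 := by
      have : 0 < n.natAbs ^ 2 := by have := Int.natAbs_pos.2 hn; positivity
      omega
    have h2 : q ^ (n.natAbs ^ 2) = q ^ (n.natAbs ^ 2 - 1) * q := by
      rw [← pow_succ, ← h1]
    rw [h2]
    have : ((n.natAbs ^ 2 : ℕ) : ℝ) = (n : ℝ) ^ 2 := by simp
    rw [this]
    field_simp

lemma th_zero (s : ℝ) : th s 0 = 1 := by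
  rw [th, tsum_eq_single 0]
  · simp
  · intro n hn; simp [hn]

lemma hasProd_pow {f : ℕ → ℝ} {a : ℝ} (h : HasProd f a) (n : ℕ) :
    HasProd (fun k => f k ^ n) (a ^ n) := by
  induction n with
  | zero => simp
  | succ n ih => simpa [pow_succ] using ih.mul h

lemma hasProd_k {q : ℝ} (h0 : 0 < q) (h1 : q < 1) (k : ℕ) (hk : k ≠ 0) :
    HasProd (fun j : ℕ => 1 - q ^ (k * (j + 1))) (EE (q ^ k)) := by
  simpa only [pow_mul] using hasProd_EE (x := q ^ k) (by positivity) (pow_lt_one₀ h0.le h1 hk)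

lemma E_pos {q : ℝ} (h0 : 0 < q) (h1 : q < 1) (k : ℕ) (hk : k ≠ 0) : 0 < EE (q ^ k) :=
  EE_pos (by positivity) (pow_lt_one₀ h0.le h1 hk)

lemma U4_eq {q : ℝ} (h0 : 0 < q) (h1 : q < 1) :
    U4 q = EE (q ^ 2) ^ 8 * EE (q ^ 4) ^ 4 / EE q ^ 8 :=
  (((hasProd_pow (hasProd_k h0 h1 2 (by norm_num)) 8).mul
    (hasProd_pow (hasProd_k h0 h1 4 (by norm_num)) 4)).div₀
    (hasProd_pow (hasProd_EE h0.le h1) 8) (pow_pos (EE_pos h0.le h1) 8).ne').tprod_eq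

lemma V4_eq {q : ℝ} (h0 : 0 < q) (h1 : q < 1) :
    V4 q = q * (EE (q ^ 2) ^ 2 * EE (q ^ 8) ^ 4 / (EE q ^ 4 * EE (q ^ 4) ^ 2)) := by
  have := EE_pos h0.le h1
  have := E_pos h0 h1 4 (by norm_num)
  rw [V4]
  congr 1
  exact (((hasProd_pow (hasProd_k h0 h1 2 (by norm_num)) 2).mul
    (hasProd_pow (hasProd_k h0 h1 8 (by norm_num)) 4)).div₀
    ((hasProd_pow (hasProd_EE h0.le h1) 4).mul (hasProd_pow (hasProd_k h0 h1 4 (by norm_num)) 2))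
    (by positivity)).tprod_eq

lemma V4_psi {q : ℝ} (h0 : 0 < q) (h1 : q < 1) :
    V4 q = q * (∑' n : ℤ, (q ^ 2) ^ (n * n - n)) ^ 2 / (4 * th (-1) q ^ 2) := by
  have := EE_pos h0.le h1
  have := E_pos h0 h1 2 (by norm_num)
  have := E_pos h0 h1 4 (by norm_num)
  rw [V4_eq h0 h1, th4_eq h0 h1, jac2 (q ^ 2) (by positivity) (pow_lt_one₀ h0.le h1 (by norm_num)),
    ← pow_mul, ← pow_mul]
  norm_num only
  field_simp
  norm_num

lemma th4_pos {q : ℝ} (h0 : 0 ≤ q) (h1 : q < 1) : 0 < th (-1) q := by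
  rcases h0.eq_or_lt with rfl | h0
  · rw [th_zero]; norm_num
  · have := EE_pos h0.le h1
    have := E_pos h0 h1 2 (by norm_num)
    rw [th4_eq h0 h1]; positivity

lemma V4_th {q : ℝ} (h0 : 0 < q) (h1 : q < 1) :
    V4 q = (th 1 q ^ 2 / th (-1) q ^ 2 - 1) / 8 := by
  have := th4_pos h0.le h1
  have h := sq_diff h0 h1
  rw [V4_psi h0 h1, show q * (∑' n : ℤ, (q ^ 2) ^ (n * n - n)) ^ 2 =
    (th 1 q ^ 2 - th (-1) q ^ 2) / 2 by rw [h]; ring]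
  field_simp
  ring

lemma W_deriv {q : ℝ} (h0 : 0 < q) (h1 : q < 1) :
    HasDerivAt (fun q => (th 1 q ^ 2 / th (-1) q ^ 2 - 1) / 8) (U4 q) q := by
  have h4 := th4_pos h0.le h1
  have d3 := th_deriv' h0 h1 (s := 1) (Or.inl rfl)
  have d4 := th_deriv' h0 h1 (s := -1) (Or.inr rfl)
  have hw := wronsk h0 h1
  rw [jac3' (q ^ 2) (by positivity) (pow_lt_one₀ h0.le h1 (by norm_num)), ← pow_mul] at hw
  norm_num only at hw
  have p1 := EE_pos h0.le h1
  have p2 := E_pos h0 h1 2 (by norm_num)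
  have p4 := E_pos h0 h1 4 (by norm_num)
  have hd : HasDerivAt (fun q => (th 1 q ^ 2 / th (-1) q ^ 2 - 1) / 8) _ q :=
    ((((d3.pow 2).div (d4.pow 2) (pow_pos h4 2).ne').sub_const 1).div_const 8)
  refine hd.congr_deriv ?_
  have e : (((2 : ℕ) : ℝ) * th 1 q ^ (2 - 1) * (dth 1 q / q) * th (-1) q ^ 2 -
      th 1 q ^ 2 * (((2 : ℕ) : ℝ) * th (-1) q ^ (2 - 1) * (dth (-1) q / q))) /
      (th (-1) q ^ 2) ^ 2 / 8 =
      th 1 q * (dth 1 q * th (-1) q - th 1 q * dth (-1) q) / (4 * q * th (-1) q ^ 3) := by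
    norm_num; field_simp; ring
  refine e.trans ?_
  rw [hw, U4_eq h0 h1, th3_eq h0 h1, th4_eq h0 h1]
  field_simp
  norm_num

lemma part1 (q : ℝ) (h0 : 0 < q) (h1 : q < 1) : (∫ t in (0:ℝ)..q, U4 t) = V4 q := by
  have hc : ContinuousOn (fun q => (th 1 q ^ 2 / th (-1) q ^ 2 - 1) / 8) (Set.Icc 0 q) := by
    intro t ht
    have ht1 : t < 1 := ht.2.trans_lt h1
    have ha : |t| < 1 := abs_lt.2 ⟨by linarith [ht.1], ht1⟩
    have c3 := (th_deriv ha (s := 1) (Or.inl rfl)).continuousAt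
    have c4 := (th_deriv ha (s := -1) (Or.inr rfl)).continuousAt
    have h4 := th4_pos ht.1 ht1
    exact ((((c3.pow 2).div (c4.pow 2) (pow_pos h4 2).ne').sub continuousAt_const).div_const
      8).continuousWithinAt
  have hd : ∀ t ∈ Set.Ioo 0 q,
      HasDerivAt (fun q => (th 1 q ^ 2 / th (-1) q ^ 2 - 1) / 8) (U4 t) t :=
    fun t ht => W_deriv ht.1 (ht.2.trans h1)
  have hi : IntervalIntegrable U4 MeasureTheory.volume 0 q := by
    refine intervalIntegral.intervalIntegrable_deriv_of_nonneg
      (g := fun q => (th 1 q ^ 2 / th (-1) q ^ 2 - 1) / 8) ?_ ?_ ?_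
    · rwa [Set.uIcc_of_le h0.le]
    · simpa [h0.le] using hd
    · intro t ht
      simp only [h0.le, min_eq_left, max_eq_right] at ht
      have h1' := ht.2.trans h1
      have p1 := EE_pos ht.1.le h1'
      have p2 := E_pos ht.1 h1' 2 (by norm_num)
      have p4 := E_pos ht.1 h1' 4 (by norm_num)
      rw [U4_eq ht.1 h1']; positivity
  rw [intervalIntegral.integral_eq_sub_of_hasDerivAt_of_le h0.le hc hd hi, V4_th h0 h1]
  simp [th_zero]

lemma part2 : V4 (Real.exp (-Real.pi / Real.sqrt 2)) = 1 / Real.sqrt 32 := by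
  set q := Real.exp (-Real.pi / Real.sqrt 2) with hq
  have h2 : 0 < Real.sqrt 2 := by positivity
  have hss : Real.sqrt 2 * Real.sqrt 2 = 2 := Real.mul_self_sqrt (by norm_num)
  have h0 : 0 < q := Real.exp_pos _
  have h1 : q < 1 := by
    rw [hq, ← Real.exp_zero, Real.exp_lt_exp]
    exact div_neg_of_neg_of_pos (by linarith [Real.pi_pos]) h2
  set S := ∑' n : ℤ, (q ^ 2) ^ (n * n - n) with hS
  set K := Real.exp (-Real.pi * Real.sqrt 2 / 4) with hK
  have hKq : K ^ 2 = q := by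
    rw [hK, hq, ← Real.exp_nat_mul]; congr 1; field_simp; norm_num
  set a : ℝ := 1 / Real.sqrt 2 with ha
  have hap : 0 < a := by positivity
  have key := Complex.tsum_exp_neg_quadratic (a := (a : ℂ)) (by simpa using hap) (Complex.I / 2)
  have l : ∀ n : ℤ, Complex.exp (-Real.pi * a * n ^ 2 + 2 * Real.pi * (Complex.I / 2) * n) =
      (((-1 : ℝ) ^ n * q ^ (n.natAbs ^ 2) : ℝ) : ℂ) := by
    intro n
    have e1 : q ^ (n.natAbs ^ 2) = Real.exp (-Real.pi * a * n ^ 2) := by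
      rw [hq, ← Real.exp_nat_mul, ha]; congr 1; push_cast
      rw [Nat.cast_natAbs, Int.cast_abs, sq_abs]; ring
    have e2 : Complex.exp (2 * Real.pi * (Complex.I / 2) * n) = (-1) ^ n := by
      rw [← Complex.exp_pi_mul_I, ← Complex.exp_int_mul]; congr 1; ring
    rw [Complex.exp_add, e2, e1]; push_cast; ring
  have r : ∀ n : ℤ, Complex.exp (-Real.pi / a * (n + Complex.I * (Complex.I / 2)) ^ 2) =
      ((K * (q ^ 2) ^ (n * n - n) : ℝ) : ℂ) := by
    intro n
    have e1 : (q ^ 2) ^ (n * n - n) = Real.exp (-Real.pi * Real.sqrt 2 * (n * n - n)) := by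
      rw [hq, ← Real.exp_nat_mul, ← Real.rpow_intCast, ← Real.exp_mul]; congr 1; push_cast
      field_simp; linear_combination ((n : ℝ) ^ 2 - n) * hss
    have e2 : (n : ℂ) + Complex.I * (Complex.I / 2) = n - 1 / 2 := by
      linear_combination (1 / 2 : ℂ) * Complex.I_mul_I
    rw [e1, hK, ← Real.exp_add, e2, ha]
    push_cast
    congr 1
    field_simp
    ring
  simp only [l, r] at key
  rw [← Complex.ofReal_tsum, ← Complex.ofReal_tsum, tsum_mul_left] at key
  have hcp : (a : ℂ) ^ (1 / 2 : ℂ) = ((Real.sqrt a : ℝ) : ℂ) := by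
    rw [Real.sqrt_eq_rpow, Complex.ofReal_cpow hap.le]; norm_num
  rw [hcp] at key
  have key2 : th (-1) q = 1 / Real.sqrt a * (K * S) := by
    rw [th]; exact_mod_cast key
  have hSp : 0 < th (-1) q := th4_pos h0.le h1
  have hS0 : S ≠ 0 := by
    intro h; rw [key2, h] at hSp; simp at hSp
  rw [V4_psi h0 h1, key2, mul_pow, mul_pow, hKq, div_pow, Real.sq_sqrt hap.le, ha,
    show (32 : ℝ) = 4 ^ 2 * 2 by norm_num, Real.sqrt_mul (by positivity), Real.sqrt_sq (by norm_num)]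
  rw [← hS]
  field_simp

theorem stmt_4 :
    (∀ q : ℝ, 0 < q → q < 1 → (∫ t in (0:ℝ)..q, U4 t) = V4 q) ∧
    V4 (Real.exp (-Real.pi / Real.sqrt 2)) = 1 / Real.sqrt 32 := by
  exact ⟨part1, part2⟩
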